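/- arXiv:1506.02791 — 8 statements merged into one kernel-verified Lean document; each statement's English description precedes it below -/
import Mathlib

section
/- If G and H are groups which both have the non-covering property, then the direct product G × H has the non-covering property. -/
/-- A group `G` has the non-covering property if for all normal subgroups `M < N` of
finite index and every `g ∈ G`, there is `h ∈ gN` such that for all `x ∈ G`,
`x⁻¹ h x ∉ gM`. -/
def NonCoveringProperty (G : Type*) [Group G] : Prop :=
  ∀ (M N : Subgroup G), M.Normal → N.Normal → M.FiniteIndex → N.FiniteIndex → M < N →
    ∀ g : G, ∃ n ∈ N, ∀ x : G, ∀ m ∈ M, x⁻¹ * (g * n) * x ≠ g * m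

def RedNC (Q : Type*) [Group Q] : Prop :=
  ∀ (N : Subgroup Q), N.Normal → ∀ g : Q, (∀ n ∈ N, ∃ x : Q, x⁻¹ * g * x = g * n) → N = ⊥

theorem RedNC.of_surj {G A : Type*} [Group G] [Group A] [Finite A] (hG : NonCoveringProperty G)
    (f : G →* A) (hf : Function.Surjective f) : RedNC A := by
  intro N hN g hg
  by_contra hne
  obtain ⟨g, rfl⟩ := hf g
  have hk : f.ker.FiniteIndex := inferInstance
  have hle : f.ker ≤ N.comap f := fun x hx => by
    rw [MonoidHom.mem_ker] at hx
    rw [Subgroup.mem_comap, hx]; exact N.one_mem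
  have hlt : f.ker < N.comap f := by
    refine lt_of_le_of_ne hle fun h => hne ?_
    rw [eq_bot_iff]
    intro y hy
    obtain ⟨y, rfl⟩ := hf y
    have : y ∈ f.ker := by rw [h]; exact hy
    exact this
  obtain ⟨n, hn, h⟩ := hG f.ker (N.comap f) inferInstance inferInstance hk
    (Subgroup.finiteIndex_of_le hle) hlt g
  obtain ⟨x, hx⟩ := hg (f n) hn
  obtain ⟨x, rfl⟩ := hf x
  refine h x⁻¹ (g⁻¹ * (x * (g * n) * x⁻¹)) ?_ (by group)
  rw [MonoidHom.mem_ker]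
  simp only [map_mul, map_inv]
  rw [← hx]; group

theorem RedNC.central {A : Type*} [Group A] (hA : RedNC A) (a x u : A)
    (hu : ∀ y, u * y = y * u) (h : x⁻¹ * a * x = a * u) : u = 1 := by
  let U : Subgroup A :=
    { carrier := {u | (∀ y, u * y = y * u) ∧ ∃ x, x⁻¹ * a * x = a * u}
      one_mem' := ⟨by simp, 1, by simp⟩
      mul_mem' := by
        rintro u v ⟨hu, x, hx⟩ ⟨hv, y, hy⟩
        refine ⟨fun z => by rw [mul_assoc, hv, ← mul_assoc, hu, mul_assoc], x * y, ?_⟩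
        calc (x * y)⁻¹ * a * (x * y) = y⁻¹ * (x⁻¹ * a * x) * y := by group
          _ = y⁻¹ * a * (u * y) := by rw [hx]; group
          _ = (y⁻¹ * a * y) * u := by rw [hu]; group
          _ = a * (u * v) := by rw [hy, hu v]; group
      inv_mem' := by
        rintro u ⟨hu, x, hx⟩
        have hu' : ∀ y, u⁻¹ * y = y * u⁻¹ := fun y =>
          ((show Commute u y from hu y).inv_left)
        refine ⟨hu', x⁻¹, ?_⟩
        have : a = x * a * x⁻¹ * u := by
          calc a = x * (x⁻¹ * a * x) * x⁻¹ := by group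
            _ = x * a * (u * x⁻¹) := by rw [hx]; group
            _ = _ := by rw [hu]; group
        rw [eq_mul_inv_iff_mul_eq, inv_inv]; exact this.symm }
  have hU : U.Normal := ⟨by
    rintro n ⟨hn, hx⟩ g
    have : g * n * g⁻¹ = n := by rw [← hn]; group
    rw [this]; exact ⟨hn, hx⟩⟩
  have := hA U hU a (fun n hn => hn.2)
  have hm : u ∈ U := ⟨hu, x, h⟩
  rw [this] at hm
  exact hm

section
variable {A B Q : Type*} [Group A] [Group B] [Group Q]

theorem comm_of_eq (α : A →* Q) (β : B →* Q) (hα : Function.Injective α)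
    (hc : ∀ a b, α a * β b = β b * α a) (t : A) (s : B) (h : α t = β s) (y : A) :
    t * y = y * t := by
  apply hα
  rw [map_mul, map_mul, h, hc]

/-- The key cancellation. -/
theorem key (α : A →* Q) (β : B →* Q) (hα : Function.Injective α)
    (hc : ∀ a b, α a * β b = β b * α a) (hA : RedNC A) (a x p : A) (b b' : B)
    (hp : ∀ y, p * y = y * p)
    (h : α (x⁻¹ * a * x) * β b' = α (a * p) * β b) : α p * β b = β b' := by
  have h1 : α ((a * p)⁻¹ * (x⁻¹ * a * x)) = β (b * b'⁻¹) := by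
    rw [map_mul, map_inv, map_mul β, map_inv, inv_mul_eq_iff_eq_mul, ← mul_assoc,
      eq_mul_inv_iff_mul_eq, h]
  have ht := comm_of_eq α β hα hc _ _ h1
  have := hA.central a x (p * ((a * p)⁻¹ * (x⁻¹ * a * x)))
    (fun y => by rw [mul_assoc, ht, ← mul_assoc, hp, mul_assoc]) (by group)
  have h2 : α p * β (b * b'⁻¹) = 1 := by rw [← h1, ← map_mul, this, map_one]
  rw [map_mul, map_inv, ← mul_assoc, mul_inv_eq_one] at h2
  exact h2

theorem conj_split (α : A →* Q) (β : B →* Q) (hc : ∀ a b, α a * β b = β b * α a)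
    (a x : A) (b y : B) :
    (α x * β y)⁻¹ * (α a * β b) * (α x * β y) = α (x⁻¹ * a * x) * β (y⁻¹ * b * y) := by
  have e1 := hc x⁻¹ y⁻¹
  have e2 := hc a y⁻¹
  have e3 := hc x b
  calc _ = (β y⁻¹ * α x⁻¹) * (α a * β b) * (α x * β y) := by simp
    _ = α x⁻¹ * (β y⁻¹ * α a) * (β b * α x) * β y := by rw [← e1]; group
    _ = α x⁻¹ * α a * (β y⁻¹ * α x) * β b * β y := by rw [← e2, ← e3]; group
    _ = _ := by rw [← hc]; simp only [map_mul]; group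

theorem step1 (α : A →* Q) (β : B →* Q) (hα : Function.Injective α) (hβ : Function.Injective β)
    (hc : ∀ a b, α a * β b = β b * α a) (hs : ∀ q, ∃ a b, q = α a * β b)
    (hA : RedNC A) (hB : RedNC B) (N : Subgroup Q) (hN : N.Normal) (a : A) (b : B)
    (h : ∀ n ∈ N, ∃ x : Q, x⁻¹ * (α a * β b) * x = (α a * β b) * n) (p : A) (hp : α p ∈ N) :
    p = 1 := by
  have : N.comap α = ⊥ := by
    refine hA _ inferInstance a fun n hn => ?_
    obtain ⟨x, hx⟩ := h _ hn
    obtain ⟨x, y, rfl⟩ := hs x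
    refine ⟨x, hα ?_⟩
    rw [conj_split α β hc, mul_assoc (α a), ← hc, ← mul_assoc (α a), ← map_mul α a] at hx
    have := key β α hβ (fun a b => (hc b a).symm) hB b y 1 (a * n) (x⁻¹ * a * x) (by simp)
      (by rw [← hc, hx, hc, mul_one])
    rw [← this]; simp
  have hm : p ∈ N.comap α := hp
  rw [this] at hm
  exact hm

theorem cent (α : A →* Q) (β : B →* Q) (hc : ∀ a b, α a * β b = β b * α a)
    (N : Subgroup Q) (hN : N.Normal) (h : ∀ p, α p ∈ N → p = 1) (p : A) (q : B)
    (hn : α p * β q ∈ N) (y : A) : p * y = y * p := by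
  have h1 : α (p * y * p⁻¹ * y⁻¹) ∈ N := by
    have h2 := N.mul_mem hn (hN.conj_mem _ (N.inv_mem hn) (α y))
    have : α (p * y * p⁻¹ * y⁻¹) = α p * β q * (α y * (α p * β q)⁻¹ * (α y)⁻¹) := by
      calc _ = α p * α y * α p⁻¹ * α y⁻¹ := by simp
        _ = α p * (α y * β q) * (β q)⁻¹ * α p⁻¹ * α y⁻¹ := by group
        _ = α p * (β q * α y) * β q⁻¹ * α p⁻¹ * α y⁻¹ := by rw [hc]; simp
        _ = α p * β q * α y * (β q⁻¹ * α p⁻¹) * α y⁻¹ := by group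
        _ = _ := by simp [mul_assoc]
    rw [this]; exact h2
  have := h _ h1
  rw [mul_inv_eq_one, mul_inv_eq_iff_eq_mul] at this
  exact this

theorem RedNC.central_prod (α : A →* Q) (β : B →* Q) (hα : Function.Injective α)
    (hβ : Function.Injective β)
    (hc : ∀ a b, α a * β b = β b * α a) (hs : ∀ q, ∃ a b, q = α a * β b)
    (hA : RedNC A) (hB : RedNC B) : RedNC Q := by
  intro N hN g h
  obtain ⟨a, b, rfl⟩ := hs g
  have hc' : ∀ b a, β b * α a = α a * β b := fun b a => (hc a b).symm
  have s1 := step1 α β hα hβ hc hs hA hB N hN a b h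
  have s2 := step1 β α hβ hα hc' (fun q => by
    obtain ⟨a, b, rfl⟩ := hs q; exact ⟨b, a, hc _ _⟩) hB hA N hN b a (by rwa [← hc])
  rw [eq_bot_iff]
  intro n hn
  obtain ⟨x, hx⟩ := h n hn
  obtain ⟨x, y, rfl⟩ := hs x
  obtain ⟨p, q, rfl⟩ := hs n
  have cp := cent α β hc N hN s1 p q hn
  have cq := cent β α hc' N hN s2 q p (by rwa [← hc])
  rw [conj_split α β hc] at hx
  have hx' : α (x⁻¹ * a * x) * β (y⁻¹ * b * y) = α (a * p) * β (b * q) := by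
    rw [hx]
    calc _ = α a * (β b * α p) * β q := by group
      _ = _ := by rw [← hc]; simp only [map_mul]; group
  have k1 := key α β hα hc hA a x p _ _ cp hx'
  obtain ⟨w, k4⟩ : ∃ w, α p = β w := ⟨y⁻¹ * b * y * (b * q)⁻¹, by
    rw [map_mul, map_inv, eq_mul_inv_iff_mul_eq, k1]⟩
  have cw := comm_of_eq β α hβ hc' _ _ k4.symm
  have k5 : y⁻¹ * b * y = b * (w * q) := by
    apply hβ
    rw [← k1, k4, ← map_mul, ← mul_assoc, ← mul_assoc, cw]
  have k6 := hB.central b y (w * q)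
    (fun z => by rw [mul_assoc, cq, ← mul_assoc, cw, mul_assoc]) k5
  rw [k4, ← map_mul, k6, map_one]
  exact Subgroup.mem_bot.2 rfl
end

/-- If `G` and `H` both have the non-covering property, then so does `G × H`. -/
theorem prod_nonCoveringProperty (G H : Type*) [Group G] [Group H]
    (hG : NonCoveringProperty G) (hH : NonCoveringProperty H) :
    NonCoveringProperty (G × H) := by
  intro M N hM hN hMf hNf hlt g
  by_contra! hcon
  let π := QuotientGroup.mk' M
  let f : G →* (G × H) ⧸ M := π.comp (MonoidHom.inl G H)
  let k : H →* (G × H) ⧸ M := π.comp (MonoidHom.inr G H)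
  have hfin : Finite ((G × H) ⧸ M) := inferInstance
  have hA : RedNC f.range := RedNC.of_surj hG f.rangeRestrict f.rangeRestrict_surjective
  have hB : RedNC k.range := RedNC.of_surj hH k.rangeRestrict k.rangeRestrict_surjective
  have hQ : RedNC ((G × H) ⧸ M) := by
    refine RedNC.central_prod f.range.subtype k.range.subtype Subtype.val_injective
      Subtype.val_injective ?_ ?_ hA hB
    · rintro ⟨_, a, rfl⟩ ⟨_, b, rfl⟩
      simp [f, k, ← map_mul]
    · intro q
      obtain ⟨⟨a, b⟩, rfl⟩ := QuotientGroup.mk'_surjective M q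
      refine ⟨⟨_, a, rfl⟩, ⟨_, b, rfl⟩, ?_⟩
      simp [f, k, π, ← QuotientGroup.mk_mul]
  have hb := hQ (N.map π) (hN.map π (QuotientGroup.mk'_surjective M)) (π g) (by
    rintro _ ⟨n, hn, rfl⟩
    obtain ⟨x, m, hm, e⟩ := hcon n hn
    refine ⟨π x⁻¹, ?_⟩
    have hm1 : π m = 1 := (QuotientGroup.eq_one_iff m).2 hm
    have e2 := congrArg π e
    simp only [map_mul, hm1, mul_one, map_inv] at e2 ⊢
    conv_lhs => rw [← e2]
    group)
  rw [Subgroup.map_eq_bot_iff, QuotientGroup.ker_mk'] at hb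
  exact absurd hlt (not_lt_of_ge hb)
end

section
/- Let G be a group with the non-covering property. Let M and N be normal subgroups of G of finite index such that N is not contained in M, and let g₁, g₂ ∈ G. Then there exists h ∈ g₁N such that for all x ∈ G, x⁻¹hx ∉ g₂M. -/
/-- If `G` has the non-covering property, `M, N` are finite-index normal subgroups with
`N ⊄ M`, and `g₁, g₂ ∈ G`, then there is `h ∈ g₁N` such that for all `x ∈ G`,
`x⁻¹ h x ∉ g₂M`. -/
theorem nonCoveringProperty_two_cosets (G : Type*) [Group G]
    (hG : NonCoveringProperty G) (M N : Subgroup G)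
    (hMnormal : M.Normal) (hNnormal : N.Normal)
    (hMfi : M.FiniteIndex) (hNfi : N.FiniteIndex)
    (hNM : ¬ N ≤ M) (g₁ g₂ : G) :
    ∃ n ∈ N, ∀ x : G, ∀ m ∈ M, x⁻¹ * (g₁ * n) * x ≠ g₂ * m := by 
  by_contra hcon
  push Not at hcon
  have hlt : M < N ⊔ M := by
    refine lt_of_le_of_ne le_sup_right fun h => hNM ?_
    rw [h]
    exact le_sup_left
  obtain ⟨k, hk, hkx⟩ := hG M (N ⊔ M) hMnormal inferInstance hMfi
    (Subgroup.finiteIndex_of_le (le_sup_right : M ≤ N ⊔ M)) hlt g₁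
  obtain ⟨n, hn, m, hm, rfl⟩ := Subgroup.mem_sup_of_normal_right.mp hk
  obtain ⟨x, a, ha, hxa⟩ := hcon n hn
  obtain ⟨y, b, hb, hyb⟩ := hcon 1 N.one_mem
  have h1 : g₁ * n = x * (g₂ * a) * x⁻¹ := by rw [← hxa]; group
  have h2 : g₂ = y⁻¹ * g₁ * y * b⁻¹ := by
    rw [eq_mul_inv_iff_mul_eq, ← hyb]; group
  refine hkx (x * y⁻¹) (y * (b⁻¹ * a * (x⁻¹ * m * x)) * y⁻¹) ?_ ?_
  · apply hMnormal.conj_mem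
    refine M.mul_mem (M.mul_mem (M.inv_mem hb) ha) ?_
    simpa using hMnormal.conj_mem m hm x⁻¹
  · rw [← mul_assoc g₁ n m, h1, h2]
    group
end

section
/- The symmetric group S₃ on three elements does not have the non-covering property. -/
/-- The symmetric group `S₃` does not have the non-covering property. -/
theorem symmGroup3_not_nonCoveringProperty :
    ¬ NonCoveringProperty (Equiv.Perm (Fin 3)) := by
  intro H
  have hdec : ∀ n : Equiv.Perm (Fin 3), Equiv.Perm.sign n = 1 →
      ∃ x : Equiv.Perm (Fin 3), x⁻¹ * (Equiv.swap 0 1 * n) * x = Equiv.swap 0 1 := by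
    decide
  have hlt : (⊥ : Subgroup (Equiv.Perm (Fin 3))) < alternatingGroup (Fin 3) := by
    rw [bot_lt_iff_ne_bot]
    intro h
    have h1 : (Equiv.swap 0 1 * Equiv.swap 1 2 : Equiv.Perm (Fin 3)) ∈
        alternatingGroup (Fin 3) := by
      rw [Equiv.Perm.mem_alternatingGroup]; decide
    rw [h, Subgroup.mem_bot] at h1
    exact absurd h1 (by decide)
  obtain ⟨n, hn, h⟩ := H ⊥ (alternatingGroup (Fin 3)) inferInstance inferInstance
    inferInstance inferInstance hlt (Equiv.swap 0 1)
  obtain ⟨x, hx⟩ := hdec n (Equiv.Perm.mem_alternatingGroup.mp hn)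
  exact h x 1 (Subgroup.one_mem _) (by rw [hx, mul_one])
end

section
/- The dihedral group of order 8 does not have the non-covering property. -/
/-- The dihedral group of order 8 does not have the non-covering property. -/
theorem dihedral8_not_nonCoveringProperty :
    ¬ NonCoveringProperty (DihedralGroup 4) := by
  intro h
  have hlt : (⊥ : Subgroup (DihedralGroup 4)) < Subgroup.center (DihedralGroup 4) := by
    rw [bot_lt_iff_ne_bot]
    intro hb
    have h2 : (DihedralGroup.r 2 : DihedralGroup 4) ∈ Subgroup.center (DihedralGroup 4) := by
      rw [Subgroup.mem_center_iff]
      decide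
    rw [hb, Subgroup.mem_bot] at h2
    revert h2
    decide
  obtain ⟨n, hn, hx⟩ := h ⊥ (Subgroup.center _) inferInstance inferInstance inferInstance
    inferInstance hlt (DihedralGroup.r 1)
  rw [Subgroup.mem_center_iff] at hn
  have key : ∀ n : DihedralGroup 4, (∀ g, g * n = n * g) →
      ∃ x : DihedralGroup 4, x⁻¹ * (DihedralGroup.r 1 * n) * x = DihedralGroup.r 1 * 1 := by
    decide
  obtain ⟨x, e⟩ := key n hn
  exact hx x 1 (Subgroup.one_mem _) e
end

section
/- The alternating group A₄ on four elements does not have the non-covering property. -/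
set_option maxRecDepth 100000 in
theorem a4_sq_mul : ∀ a b : Equiv.Perm (Fin 4), a.sign = 1 → a * a = 1 → b.sign = 1 → b * b = 1 →
    (a * b) * (a * b) = 1 := by decide +kernel

set_option maxRecDepth 100000 in
theorem a4_conj : ∀ n : alternatingGroup (Fin 4), n * n = 1 →
    ∃ x : alternatingGroup (Fin 4),
      x⁻¹ * ((⟨Equiv.swap 0 1 * Equiv.swap 1 2, Equiv.Perm.mem_alternatingGroup.2 (by decide)⟩ : alternatingGroup (Fin 4)) * n) * x =
        ⟨Equiv.swap 0 1 * Equiv.swap 1 2, Equiv.Perm.mem_alternatingGroup.2 (by decide)⟩ := by decide +kernel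

/-- The Klein four subgroup of `A₄`. -/
def a4V : Subgroup (alternatingGroup (Fin 4)) where
  carrier := {x | x * x = 1}
  one_mem' := by simp
  mul_mem' := by
    rintro ⟨a, ha⟩ ⟨b, hb⟩ h1 h2
    exact Subtype.ext (a4_sq_mul a b ha (congrArg Subtype.val h1) hb (congrArg Subtype.val h2))
  inv_mem' := by
    intro a h
    have h' : a * a = 1 := h
    change a⁻¹ * a⁻¹ = 1
    rw [← mul_inv_rev, h', inv_one]

/-- The alternating group `A₄` does not have the non-covering property. -/
theorem alternating4_not_nonCoveringProperty :
    ¬ NonCoveringProperty (alternatingGroup (Fin 4)) := by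
  intro h
  have hN : a4V.Normal := by
    refine ⟨fun n hn g => ?_⟩
    have h' : n * n = 1 := hn
    change g * n * g⁻¹ * (g * n * g⁻¹) = 1
    calc g * n * g⁻¹ * (g * n * g⁻¹) = g * (n * n) * g⁻¹ := by group
      _ = 1 := by rw [h']; group
  have hlt : (⊥ : Subgroup (alternatingGroup (Fin 4))) < a4V := by
    rw [bot_lt_iff_ne_bot]
    intro he
    have hm : (⟨Equiv.swap 0 1 * Equiv.swap 2 3, Equiv.Perm.mem_alternatingGroup.2 (by decide)⟩ : alternatingGroup (Fin 4)) ∈ a4V := by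
      change _ * _ = _
      decide +kernel
    rw [he, Subgroup.mem_bot] at hm
    revert hm
    decide +kernel
  obtain ⟨n, hn, hx⟩ := h ⊥ a4V inferInstance hN inferInstance inferInstance hlt
    ⟨Equiv.swap 0 1 * Equiv.swap 1 2, Equiv.Perm.mem_alternatingGroup.2 (by decide)⟩
  obtain ⟨x, hx'⟩ := a4_conj n hn
  exact hx x 1 (Subgroup.one_mem _) (by rw [mul_one]; exact hx')
end

section
/- Let G and H be groups, and let M and N be normal subgroups of G × H with M ⊆ N and M ≠ N. Suppose the projections agree: π₁(M) = π₁(N) as subgroups of G and π₂(M) = π₂(N) as subgroups of H. Define M₁ = {x ∈ G : (x,e) ∈ M}, N₁ = {x ∈ G : (x,e) ∈ N}, M₂ = {y ∈ H : (e,y) ∈ M}, and N₂ = {y ∈ H : (e,y) ∈ N}. Then M₁ is strictly contained in N₁ and M₂ is strictly contained in N₂. -/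
/-- Let `M ⊆ N` be distinct normal subgroups of `G × H` whose projections to `G` agree
and whose projections to `H` agree. Then `M₁ = {x : (x,e) ∈ M}` is strictly contained
in `N₁` and `M₂ = {y : (e,y) ∈ M}` is strictly contained in `N₂`. -/
theorem kernels_strictly_contained (G H : Type*) [Group G] [Group H]
    (M N : Subgroup (G × H)) (hM : M.Normal) (hN : N.Normal)
    (hMN : M ≤ N) (hne : M ≠ N)
    (hfst : M.map (MonoidHom.fst G H) = N.map (MonoidHom.fst G H))
    (hsnd : M.map (MonoidHom.snd G H) = N.map (MonoidHom.snd G H)) :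
    M.comap (MonoidHom.inl G H) < N.comap (MonoidHom.inl G H) ∧
    M.comap (MonoidHom.inr G H) < N.comap (MonoidHom.inr G H) := by
  refine ⟨lt_of_le_not_ge (Subgroup.comap_mono hMN) fun h => hne (le_antisymm hMN ?_),
    lt_of_le_not_ge (Subgroup.comap_mono hMN) fun h => hne (le_antisymm hMN ?_)⟩
  · rintro ⟨x, y⟩ hxy
    have hy : y ∈ M.map (MonoidHom.snd G H) := by
      rw [hsnd]
      exact ⟨(x, y), hxy, rfl⟩
    obtain ⟨⟨x', y'⟩, hm, hy'⟩ := hy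
    have hy2 : y' = y := hy'
    subst hy2
    have h1 : (x * x'⁻¹, (1 : H)) ∈ N := by
      simpa using N.mul_mem hxy (N.inv_mem (hMN hm))
    have h2 : (x * x'⁻¹, (1 : H)) ∈ M := h (x := x * x'⁻¹) h1
    simpa using M.mul_mem h2 hm
  · rintro ⟨x, y⟩ hxy
    have hx : x ∈ M.map (MonoidHom.fst G H) := by
      rw [hfst]
      exact ⟨(x, y), hxy, rfl⟩
    obtain ⟨⟨x', y'⟩, hm, hx'⟩ := hx
    have hx2 : x' = x := hx'
    subst hx2
    have h1 : ((1 : G), y * y'⁻¹) ∈ N := by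
      simpa using N.mul_mem hxy (N.inv_mem (hMN hm))
    have h2 : ((1 : G), y * y'⁻¹) ∈ M := h (x := y * y'⁻¹) h1
    simpa using M.mul_mem h2 hm
end

section
/- Let p, q₁, …, qₖ be pairwise distinct prime numbers, and for a prime r let 2^{1/r} denote the positive real r-th root of 2. Then 2^{1/p} does not belong to the subfield of ℝ generated over ℚ by 2^{1/q₁}, …, 2^{1/qₖ}. -/
open Polynomial in
theorem aux_irr (n : ℕ) (hn : n ≠ 0) : Irreducible (X ^ n - C (2:ℚ) : ℚ[X]) := by
  have hm : (X ^ n - C (2:ℤ) : ℤ[X]).Monic := monic_X_pow_sub_C _ hn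
  have h : Irreducible (X ^ n - C (2:ℤ) : ℤ[X]) := by
    have hdeg : (X ^ n - C (2:ℤ) : ℤ[X]).natDegree = n := natDegree_X_pow_sub_C
    have hP : (Ideal.span {(2:ℤ)}).IsPrime :=
      (Ideal.span_singleton_prime (by norm_num)).2 Int.prime_two
    refine IsEisensteinAt.irreducible (𝓟 := Ideal.span {(2:ℤ)}) ⟨?_, ?_, ?_⟩ hP hm.isPrimitive
      (by omega)
    · rw [hm.leadingCoeff, Ideal.mem_span_singleton]; norm_num
    · intro m hmn
      rw [hdeg] at hmn
      rw [Ideal.mem_span_singleton, coeff_sub, coeff_X_pow, if_neg hmn.ne, coeff_C]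
      split_ifs <;> simp
    · rw [Ideal.span_singleton_pow, Ideal.mem_span_singleton, coeff_sub, coeff_X_pow,
        if_neg hn.symm, coeff_C]
      norm_num
  have := (hm.irreducible_iff_irreducible_map_fraction_map (K := ℚ)).1 h
  rwa [Polynomial.map_sub, Polynomial.map_pow, map_X, map_C,
    show (algebraMap ℤ ℚ) 2 = 2 by simp] at this

open Polynomial in
theorem aux_minpoly (n : ℕ) (hn : n ≠ 0) :
    minpoly ℚ ((2:ℝ) ^ ((n:ℝ)⁻¹)) = X ^ n - C (2:ℚ) := by
  symm
  apply minpoly.eq_of_irreducible_of_monic (aux_irr n hn)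
  · simp [Real.rpow_inv_natCast_pow (show (0:ℝ) ≤ 2 by norm_num) hn]
  · exact monic_X_pow_sub_C _ hn

theorem aux_int (n : ℕ) (hn : n ≠ 0) : IsIntegral ℚ ((2:ℝ) ^ ((n:ℝ)⁻¹)) := by
  apply minpoly.ne_zero_iff.1
  rw [aux_minpoly n hn]
  exact (Polynomial.monic_X_pow_sub_C _ hn).ne_zero

theorem aux_natDegree (n : ℕ) (hn : n ≠ 0) :
    (minpoly ℚ ((2:ℝ) ^ ((n:ℝ)⁻¹))).natDegree = n := by
  rw [aux_minpoly n hn, Polynomial.natDegree_X_pow_sub_C]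

/-- Let `p, q₁, …, qₖ` be pairwise distinct primes. Then `2^(1/p)` does not belong to
the subfield of `ℝ` generated over `ℚ` by `2^(1/q₁), …, 2^(1/qₖ)`. -/
theorem prime_root_not_in_subfield (k : ℕ) (p : ℕ) (q : Fin k → ℕ)
    (hp : Nat.Prime p) (hq : ∀ i, Nat.Prime (q i))
    (hqinj : Function.Injective q) (hpq : ∀ i, q i ≠ p) :
    (2 : ℝ) ^ ((p : ℝ)⁻¹) ∉ Subfield.closure
      (Set.range ((↑) : ℚ → ℝ) ∪ Set.range fun i => (2 : ℝ) ^ (((q i : ℕ) : ℝ)⁻¹)) := by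
  intro hmem
  set N := ∏ i, q i with hN
  have hN0 : N ≠ 0 := Finset.prod_ne_zero_iff.2 fun i _ => (hq i).ne_zero
  set α : ℝ := (2:ℝ) ^ ((N:ℝ)⁻¹) with hα
  let K := IntermediateField.adjoin ℚ {α}
  have hle : Subfield.closure (Set.range ((↑) : ℚ → ℝ) ∪
      Set.range fun i => (2 : ℝ) ^ (((q i : ℕ) : ℝ)⁻¹)) ≤ K.toSubfield := by
    rw [Subfield.closure_le]
    rintro x (⟨r, rfl⟩ | ⟨i, rfl⟩)
    · exact K.algebraMap_mem r
    · obtain ⟨m, hm⟩ : q i ∣ N := Finset.dvd_prod_of_mem q (Finset.mem_univ i)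
      have hm0 : m ≠ 0 := by rintro rfl; simp at hm; exact hN0 hm
      have e : (2 : ℝ) ^ (((q i : ℕ) : ℝ)⁻¹) = α ^ m := by
        rw [hα, ← Real.rpow_natCast, ← Real.rpow_mul (by norm_num), hm]
        congr 1
        have : (m:ℝ) ≠ 0 := by exact_mod_cast hm0
        have : (q i:ℝ) ≠ 0 := by exact_mod_cast (hq i).ne_zero
        push_cast
        field_simp
      change (2 : ℝ) ^ (((q i : ℕ) : ℝ)⁻¹) ∈ K
      rw [e]
      exact pow_mem (IntermediateField.mem_adjoin_simple_self ℚ α) m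
  have hγ : (2 : ℝ) ^ ((p : ℝ)⁻¹) ∈ K := hle hmem
  have hi := aux_int N hN0
  have : FiniteDimensional ℚ K := IntermediateField.adjoin.finiteDimensional hi
  have hK : Module.finrank ℚ K = N := by
    rw [IntermediateField.adjoin.finrank hi, aux_natDegree N hN0]
  have hd : p ∣ N := by
    have h1 := minpoly.degree_dvd (K := ℚ) (x := (⟨_, hγ⟩ : K)) (Algebra.IsIntegral.isIntegral _)
    have h2 : minpoly ℚ ((2:ℝ) ^ ((p:ℝ)⁻¹)) = minpoly ℚ (⟨_, hγ⟩ : K) :=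
      minpoly.algebraMap_eq (algebraMap K ℝ).injective (⟨_, hγ⟩ : K)
    rw [hK, ← h2, aux_natDegree p hp.ne_zero] at h1
    exact h1
  obtain ⟨i, -, h⟩ := (hp.prime.dvd_finsetProd_iff q).1 hd
  exact hpq i ((Nat.prime_dvd_prime_iff_eq hp (hq i)).1 h).symm
end

section
/- Let S be a set of prime numbers and let K be the subfield of ℝ generated over ℚ by {√p : p ∈ S}, where √p denotes the positive real square root of p. Then for every function ε : S → {1, −1} there exists a ring automorphism σ of K such that σ(√p) = ε(p)·√p for every p ∈ S. -/
open IntermediateField Polynomial in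
theorem lifts_ext_aux {F E K : Type*} [Field F] [Field E] [Field K] [Algebra F E] [Algebra F K]
    (x : Lifts F E K) (s : E) (c : F) (t : K) (hs : s ^ 2 = algebraMap F E c)
    (ht : t ^ 2 = algebraMap F K c) (hn : s ∉ x.carrier) :
    ∃ y, x ≤ y ∧ (∃ h : s ∈ y.carrier, y.emb ⟨s, h⟩ = t) ∧
      ∀ z ∈ y.carrier, ∃ a ∈ x.carrier, ∃ b ∈ x.carrier, z = a + b * s := by
  let _ : Algebra x.carrier K := x.emb.toRingHom.toAlgebra
  have hmon : (X ^ 2 - C (algebraMap F x.carrier c)).Monic := monic_X_pow_sub_C _ two_ne_zero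
  have hroot : aeval s (X ^ 2 - C (algebraMap F x.carrier c)) = 0 := by
    simp [hs]
  have h1 : IsIntegral x.carrier s := ⟨_, hmon, hroot⟩
  have hmin : minpoly x.carrier s = X ^ 2 - C (algebraMap F x.carrier c) := by
    refine (minpoly.eq_of_irreducible_of_monic ?_ hroot hmon).symm
    refine (X_pow_sub_C_irreducible_iff_of_prime Nat.prime_two).2 ?_
    intro b hb
    have hb' : (b : E) ^ 2 = s ^ 2 := by
      rw [hs]
      exact congrArg (fun z : x.carrier => (z : E)) hb
    rcases sq_eq_sq_iff_eq_or_eq_neg.1 hb' with h | h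
    · exact hn (h ▸ b.2)
    · exact hn (by
        have : s = -(b : E) := by rw [h, neg_neg]
        rw [this]; exact neg_mem b.2)
  let carrier := x.carrier⟮s⟯.restrictScalars F
  let _ : Algebra x.carrier carrier := x.carrier⟮s⟯.toSubalgebra.algebra
  have hmem : t ∈ (minpoly x.carrier s).aroots K := by
    rw [mem_aroots, and_iff_right (minpoly.ne_zero h1), hmin]
    simp only [map_sub, map_pow, aeval_X, aeval_C, ht]
    rw [sub_eq_zero]
    exact (x.emb.commutes c).symm
  let φ : carrier →ₐ[x.carrier] K := ((algHomAdjoinIntegralEquiv x.carrier h1).symm ⟨t, hmem⟩)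
  refine ⟨⟨carrier, (@algHomEquivSigma F x.carrier carrier K _ _ _ _ _ _ _ _
      (IsScalarTower.of_algebraMap_eq fun _ ↦ rfl)).symm ⟨x.emb, φ⟩⟩,
    ⟨fun z hz ↦ IntermediateField.algebraMap_mem x.carrier⟮s⟯ ⟨z, hz⟩, φ.commutes⟩,
    ⟨mem_adjoin_simple_self x.carrier s, ?_⟩, ?_⟩
  · exact algHomAdjoinIntegralEquiv_symm_apply_gen x.carrier h1 ⟨t, hmem⟩
  · intro z hz
    have hz' : z ∈ x.carrier⟮s⟯.toSubalgebra := hz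
    rw [adjoin_simple_toSubalgebra_of_isAlgebraic h1.isAlgebraic] at hz'
    have hc : algebraMap F E c ∈ x.carrier := IntermediateField.algebraMap_mem _ _
    clear hz
    induction hz' using Algebra.adjoin_induction with
    | mem z h =>
      rw [Set.mem_singleton_iff] at h
      exact ⟨0, zero_mem _, 1, one_mem _, by simp [h]⟩
    | algebraMap r => exact ⟨r, r.2, 0, zero_mem _, by simp⟩
    | add u v hu hv h1 h2 =>
      obtain ⟨a, ha, b, hb, rfl⟩ := h1
      obtain ⟨a', ha', b', hb', rfl⟩ := h2
      exact ⟨a + a', add_mem ha ha', b + b', add_mem hb hb', by ring⟩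
    | mul u v hu hv h1 h2 =>
      obtain ⟨a, ha, b, hb, rfl⟩ := h1
      obtain ⟨a', ha', b', hb', rfl⟩ := h2
      exact ⟨a * a' + b * b' * algebraMap F E c,
        add_mem (mul_mem ha ha') (mul_mem (mul_mem hb hb') hc),
        a * b' + b * a', add_mem (mul_mem ha hb') (mul_mem hb ha'), by rw [← hs]; ring⟩

theorem prod_sqrt_irr_aux (U : Finset ℕ) (hU : ∀ p ∈ U, Nat.Prime p) (r : ℚ)
    (h : (r : ℝ) = ∏ p ∈ U, Real.sqrt p) : U = ∅ := by
  by_contra hne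
  obtain ⟨p, hp⟩ := Finset.nonempty_iff_ne_empty.2 hne
  have h2 : (∏ p ∈ U, Real.sqrt p) = Real.sqrt ((∏ p ∈ U, p : ℕ) : ℝ) := by
    push_cast
    exact (Real.sqrt_prod U (fun i _ => Nat.cast_nonneg i)).symm
  have hsq : IsSquare (∏ p ∈ U, p) := by
    by_contra hns
    exact (irrational_sqrt_natCast_iff.2 hns) ⟨r, by rw [h, h2]⟩
  have hsf : Squarefree (∏ p ∈ U, p) := by
    refine Finset.squarefree_prod_of_pairwise_isCoprime ?_ ?_
    · intro a ha b hb hab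
      exact Nat.coprime_iff_isRelPrime.1 ((Nat.coprime_primes (hU a ha) (hU b hb)).2 hab)
    · intro a ha
      exact (hU a ha).squarefree
  obtain ⟨k, hk⟩ := hsq
  have hk1 := hsf k ⟨1, by rw [hk, mul_one]⟩
  have hd : p ∣ ∏ p ∈ U, p := Finset.dvd_prod_of_mem _ hp
  rw [Nat.isUnit_iff] at hk1
  rw [hk, hk1] at hd
  exact (hU p hp).one_lt.ne' (Nat.dvd_one.1 (by simpa using hd))

open IntermediateField in
theorem exists_lift_signs_aux (S : Set ℕ) (hS : ∀ p ∈ S, Nat.Prime p)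
    (ε : ℕ → ℝ) (hε : ∀ p ∈ S, ε p = 1 ∨ ε p = -1) :
    ∃ φ : Lifts ℚ ℝ ℝ, ∀ p ∈ S, ∃ h : Real.sqrt p ∈ φ.carrier,
      φ.emb ⟨Real.sqrt p, h⟩ = ε p * Real.sqrt p := by
  classical
  let P : Set (Lifts ℚ ℝ ℝ) := {φ | ∀ U : Finset ℕ, (∀ p ∈ U, p ∈ S) →
    ∀ h : (∏ p ∈ U, Real.sqrt p) ∈ φ.carrier,
      φ.emb ⟨∏ p ∈ U, Real.sqrt p, h⟩ = ∏ p ∈ U, (ε p * Real.sqrt p)}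
  have hbot : (⊥ : Lifts ℚ ℝ ℝ) ∈ P := by
    intro U hU h
    have h' : (∏ p ∈ U, Real.sqrt p) ∈ (⊥ : IntermediateField ℚ ℝ) := h
    obtain ⟨r, hr⟩ := IntermediateField.mem_bot.1 h'
    have := prod_sqrt_irr_aux U (fun p hp => hS p (hU p hp)) r hr
    subst this
    exact map_one _
  obtain ⟨φ, hφ⟩ := zorn_le₀ P (by
    intro c hcP hc
    by_cases hne : c.Nonempty
    · refine ⟨Lifts.union c hc, ?_, Lifts.le_union c hc⟩
      intro U hU h
      have h' := h
      rw [Lifts.carrier_union] at h'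
      have : Nonempty c := hne.to_subtype
      have dir : Directed (· ≤ ·) (fun i : c => i.1.carrier) :=
        hc.directedOn.directed_val.mono_comp _ fun _ _ h ↦ h.1
      rw [← SetLike.mem_coe, IntermediateField.coe_iSup_of_directed dir, Set.mem_iUnion] at h'
      obtain ⟨i, hi⟩ := h'
      obtain ⟨hle, heq⟩ := Lifts.le_union c hc i.2
      rw [← hcP i.2 U hU hi, ← heq]
      rfl
    · exact ⟨⊥, hbot, fun z hz => (hne ⟨z, hz⟩).elim⟩)
  have hφP : φ ∈ P := hφ.1
  have hall : ∀ p ∈ S, Real.sqrt p ∈ φ.carrier := by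
    intro p hp
    by_contra hn
    have hε2 : ε p ^ 2 = 1 := by rcases hε p hp with h | h <;> simp [h]
    have hp2 : Real.sqrt p ^ 2 = p := Real.sq_sqrt (Nat.cast_nonneg p)
    have hp0 : (Real.sqrt p) ≠ 0 := by
      intro h0; rw [h0] at hp2
      have := (hS p hp).pos.ne'
      simp at hp2; exact this (by exact_mod_cast hp2.symm)
    have hv0 : ε p * Real.sqrt p ≠ 0 := by
      refine mul_ne_zero ?_ hp0
      intro h0; rw [h0] at hε2; norm_num at hε2
    obtain ⟨y, ⟨hle, heq⟩, ⟨hsy, hys⟩, hgen⟩ := lifts_ext_aux φ (Real.sqrt p) (p : ℚ)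
      (ε p * Real.sqrt p) (by rw [hp2]; simp) (by rw [mul_pow, hε2, hp2]; simp) hn
    have hyP : y ∈ P := by
      intro U hU h
      obtain ⟨a, ha, b, hb, hab⟩ := hgen _ h
      have hN : (∏ q ∈ U, Real.sqrt q) ^ 2 = ((∏ q ∈ U, q : ℕ) : ℝ) := by
        rw [← Finset.prod_pow]
        push_cast
        exact Finset.prod_congr rfl fun q _ => Real.sq_sqrt (Nat.cast_nonneg q)
      have h0 : a = 0 ∨ b = 0 := by
        by_contra! hcon
        apply hn
        have : Real.sqrt p = (((∏ q ∈ U, q : ℕ) : ℝ) - a ^ 2 - b ^ 2 * (p : ℕ)) / (2 * a * b) := by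
          have := hcon.1
          have := hcon.2
          rw [← hN, hab, eq_div_iff (by positivity)]
          linear_combination (-b ^ 2) * hp2
        rw [this]
        exact div_mem (sub_mem (sub_mem (_root_.natCast_mem _ _) (pow_mem ha 2))
          (mul_mem (pow_mem hb 2) (_root_.natCast_mem _ _)))
          (mul_mem (mul_mem (ofNat_mem _ 2) ha) hb)
      have hφy : ∀ V : Finset ℕ, (∀ q ∈ V, q ∈ S) → (∏ q ∈ V, Real.sqrt q) ∈ φ.carrier →
          ∀ h' : (∏ q ∈ V, Real.sqrt q) ∈ y.carrier,
          y.emb ⟨_, h'⟩ = ∏ q ∈ V, (ε q * Real.sqrt q) := by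
        intro V hV hm h'
        rw [← hφP V hV hm, ← heq]
        rfl
      rcases h0 with rfl | rfl
      · rw [zero_add] at hab
        by_cases hpU : p ∈ U
        · have e1 := Finset.mul_prod_erase U (fun q => Real.sqrt (q : ℝ)) hpU
          have e2 := Finset.mul_prod_erase U (fun q => ε q * Real.sqrt (q : ℝ)) hpU
          have hb' : (∏ q ∈ U.erase p, Real.sqrt q) = b := by
            apply mul_left_cancel₀ hp0
            rw [e1, hab, mul_comm]
          have hm : (∏ q ∈ U.erase p, Real.sqrt q) ∈ φ.carrier := hb' ▸ hb
          have := hφy (U.erase p) (fun q hq => hU q (Finset.mem_of_mem_erase hq)) hm (hle hm)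
          rw [← e2, ← this, ← hys, ← map_mul]
          congr 1
          exact Subtype.ext e1.symm
        · have e1 := Finset.prod_insert (f := fun q : ℕ => Real.sqrt (q : ℝ)) hpU
          have e2 := Finset.prod_insert (f := fun q : ℕ => ε q * Real.sqrt (q : ℝ)) hpU
          have hm : (∏ q ∈ insert p U, Real.sqrt q) ∈ φ.carrier := by
            rw [e1, hab]
            have : Real.sqrt p * (b * Real.sqrt p) = b * (p : ℕ) := by linear_combination b * hp2
            rw [this]
            exact mul_mem hb (_root_.natCast_mem _ _)
          have := hφy (insert p U) (by
            intro q hq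
            rcases Finset.mem_insert.1 hq with rfl | hq
            · exact hp
            · exact hU q hq) hm (hle hm)
          apply mul_left_cancel₀ hv0
          rw [← e2, ← this, ← hys, ← map_mul]
          congr 1
          exact Subtype.ext e1.symm
      · refine hφy U hU ?_ h
        rw [hab]; simpa using ha
    exact hn ((hφ.2 hyP ⟨hle, heq⟩).1 hsy)
  refine ⟨φ, fun p hp => ⟨hall p hp, ?_⟩⟩
  have := hφP {p} (by simpa using hp) (by simpa using hall p hp)
  simpa using this


/-- Let `S` be a set of primes and `K` the subfield of `ℝ` generated over `ℚ` by
`{√p : p ∈ S}`. Then for every sign function `ε : S → {1, −1}` there is a ring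
automorphism `σ` of `K` with `σ(√p) = ε(p)·√p` for every `p ∈ S`. -/
theorem exists_automorphism_of_signs (S : Set ℕ) (hS : ∀ p ∈ S, Nat.Prime p)
    (K : Subfield ℝ)
    (hK : K = Subfield.closure
      (Set.range ((↑) : ℚ → ℝ) ∪ {x : ℝ | ∃ p ∈ S, x = Real.sqrt p}))
    (ε : ℕ → ℝ) (hε : ∀ p ∈ S, ε p = 1 ∨ ε p = -1) :
    ∃ σ : K ≃+* K, ∀ p ∈ S, ∀ x : K, (x : ℝ) = Real.sqrt p →
      ((σ x : K) : ℝ) = ε p * Real.sqrt p := by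
  obtain ⟨φ, hφ⟩ := exists_lift_signs_aux S hS ε hε
  have hKC : ∀ x ∈ K, x ∈ φ.carrier := by
    have : K ≤ φ.carrier.toSubfield := by
      rw [hK, Subfield.closure_le]
      rintro x (⟨r, rfl⟩ | ⟨p, hp, rfl⟩)
      · exact φ.carrier.algebraMap_mem r
      · exact (hφ p hp).1
    exact this
  have hQ : ∀ r : ℚ, (r : ℝ) ∈ K := fun r => SubfieldClass.ratCast_mem K r
  have hSK : ∀ p ∈ S, Real.sqrt p ∈ K := fun p hp => by
    rw [hK]; exact Subfield.subset_closure (Or.inr ⟨p, hp, rfl⟩)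
  have hεK : ∀ p ∈ S, ε p * Real.sqrt p ∈ K := fun p hp => by
    rcases hε p hp with h | h <;> simp [h, hSK p hp]
  let ψ : φ.carrier →+* ℝ := φ.emb.toRingHom
  let i : K →+* φ.carrier :=
    { toFun := fun x => ⟨x, hKC x x.2⟩
      map_one' := rfl
      map_mul' := fun _ _ => rfl
      map_zero' := rfl
      map_add' := fun _ _ => rfl }
  let f : K →+* ℝ := ψ.comp i
  have hfp : ∀ p (hp : p ∈ S), f ⟨Real.sqrt p, hSK p hp⟩ = ε p * Real.sqrt p :=
    fun p hp => (hφ p hp).2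
  have hfK : ∀ x : K, f x ∈ K := by
    have : K ≤ (K.comap f).map K.subtype := by
      conv_lhs => rw [hK]
      rw [Subfield.closure_le]
      rintro x (⟨r, rfl⟩ | ⟨p, hp, rfl⟩)
      · refine ⟨(r : K), ?_, by simp⟩
        show f (r : K) ∈ K
        rw [map_ratCast]; exact hQ r
      · refine ⟨⟨Real.sqrt p, hSK p hp⟩, ?_, rfl⟩
        show f _ ∈ K
        rw [hfp p hp]; exact hεK p hp
    intro x
    obtain ⟨z, hz, hzx⟩ := this x.2
    have : z = x := Subtype.ext hzx
    exact this ▸ hz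
  have hsurj : K ≤ f.fieldRange := by
    conv_lhs => rw [hK]
    rw [Subfield.closure_le]
    rintro x (⟨r, rfl⟩ | ⟨p, hp, rfl⟩)
    · exact ⟨(r : K), by rw [map_ratCast]⟩
    · rcases hε p hp with h | h
      · exact ⟨⟨Real.sqrt p, hSK p hp⟩, by rw [hfp p hp, h, one_mul]⟩
      · exact ⟨-⟨Real.sqrt p, hSK p hp⟩, by rw [map_neg, hfp p hp, h]; ring⟩
  let g : K →+* K := f.codRestrict K hfK
  refine ⟨RingEquiv.ofBijective g ⟨g.injective, ?_⟩, ?_⟩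
  · intro x
    obtain ⟨z, hz⟩ := hsurj x.2
    exact ⟨z, Subtype.ext hz⟩
  · intro p hp x hx
    have : x = ⟨Real.sqrt p, hSK p hp⟩ := Subtype.ext hx
    subst this
    exact hfp p hp
end
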